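/- Let S be a maximal cap in AG(4,3). Exactly 36 maximal caps disjoint from S lie in exactly one cap-partition containing S; exactly 90 maximal caps disjoint from S lie in exactly two cap-partitions containing S; and exactly 72 maximal caps disjoint from S lie in exactly six cap-partitions containing S. (These caps are called S-1-completable, S-2-completable and S-6-completable, respectively; together they account for all 198 caps disjoint from S.) -/

import Mathlib

/-- A cap in `AG(n,3)`: a finite set of points of `Fin n → ZMod 3` containing no
three distinct collinear points (three distinct points are collinear iff they sum to zero). -/
def IsCap {n : ℕ} (C : Finset (Fin n → ZMod 3)) : Prop :=
  ∀ x ∈ C, ∀ y ∈ C, ∀ z ∈ C, x ≠ y → x ≠ z → y ≠ z → x + y + z ≠ 0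

/-- A maximal cap: a cap of largest possible size. -/
def MaximalCap {n : ℕ} (C : Finset (Fin n → ZMod 3)) : Prop :=
  IsCap C ∧ ∀ D : Finset (Fin n → ZMod 3), IsCap D → D.card ≤ C.card

/-- A cap-partition of `AG(4,3)`: an unordered set of four pairwise disjoint maximal caps
whose union is the complement of a single point. -/
def IsCapPartition (P : Finset (Finset (Fin 4 → ZMod 3))) : Prop :=
  P.card = 4 ∧ (∀ C ∈ P, MaximalCap C) ∧
  (∀ C ∈ P, ∀ D ∈ P, C ≠ D → Disjoint C D) ∧
  ∃ a : Fin 4 → ZMod 3, P.sup id = Finset.univ \ {a}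

/-!
Summing a suitable weight of the sizes of the sections of a cap over all parallel classes of
hyperplanes produces a parallel class whose section sizes are extreme. In dimensions `2` and `3`
this bounds the size of a cap by `4` and `9`; in dimensions `3` and `4` it shows that a cap of size
`9` or `20` has two parallel sections that are largest caps in one dimension less. By induction one
of these is known up to affine equivalence, and together with the remaining section of one or two
points it determines the cap. So every 20-cap of `AG(4,3)` is affinely equivalent to the quadric
cone `xy = z² + w²` without its vertex, and no point can be added to that cone.

It remains to count for this one cone. Every maximal cap is a cone `q(x - a) = 0` without its
vertex `a`, and if it is disjoint from the given cone then `a = 0`. The quadratic forms `q` are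
searched all at once: a set of forms is a number whose bits are indexed by the coefficient vectors,
and the conditions on `q` are bitwise operations on such numbers. Four disjoint maximal caps cover
all points but one, so the cap-partitions containing the cone and a cap `C` are the triangles
through `C` in the disjointness graph of the caps found.
-/

open Finset Module

/-- The point set of the affine space `AG(n,3)`. -/
abbrev AG (n : ℕ) := Fin n → ZMod 3

section AffineEquivalence

variable {m n : ℕ} {C D E : Finset (AG n)}

theorem isCap_iff_neg_add_notMem :
    IsCap C ↔ ∀ x ∈ C, ∀ y ∈ C, x ≠ y → -(x + y) ∉ C := by
  have third_ne : ∀ x y : AG n, x ≠ y → x ≠ -(x + y) := by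
    rintro x y hxy h
    refine hxy (funext fun i => ?_)
    have hi := congrFun h i
    simp only [Pi.neg_apply, Pi.add_apply] at hi
    generalize x i = a at *
    generalize y i = b at *
    decide +revert
  refine ⟨fun hC x hx y hy hxy hz => ?_, fun hC x hx y hy z hz hxy _ _ hsum => ?_⟩
  · have hyz : y ≠ -(x + y) := add_comm x y ▸ third_ne y x hxy.symm
    exact hC x hx y hy _ hz hxy (third_ne x y hxy) hyz (add_neg_cancel _)
  · exact hC x hx y hy hxy (neg_eq_of_add_eq_zero_right hsum ▸ hz)

instance : DecidablePred (IsCap : Finset (AG n) → Prop) :=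
  fun _ => decidable_of_iff _ isCap_iff_neg_add_notMem.symm

theorem IsCap.mono (hD : IsCap D) (h : C ⊆ D) : IsCap C :=
  fun x hx y hy z hz => hD x (h hx) y (h hy) z (h hz)

theorem affineMap_add_add (f : AG m →ᵃ[ZMod 3] AG n) (x y z : AG m) :
    f x + f y + f z = f.linear (x + y + z) := by
  have three_smul_zero : f 0 + f 0 + f 0 = 0 := by
    ext i
    simp only [Pi.add_apply, Pi.zero_apply]
    generalize f 0 i = a
    decide +revert
  rw [f.decomp]
  simp only [Pi.add_apply, map_add]
  linear_combination three_smul_zero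

theorem IsCap.map {C : Finset (AG m)} (hC : IsCap C) (f : AG m ≃ᵃ[ZMod 3] AG n) :
    IsCap (C.map f.toEquiv.toEmbedding) := by
  simp only [IsCap, mem_map_equiv]
  intro x hx y hy z hz hxy hxz hyz hsum
  refine hC _ hx _ hy _ hz (by simpa) (by simpa) (by simpa) ?_
  have := affineMap_add_add f.symm.toAffineMap x y z
  simpa [hsum] using this

/-- Two point sets are affinely equivalent if some affine automorphism of `AG(n,3)` maps one onto
the other. -/
def AffinelyEquivalent (C D : Finset (AG n)) : Prop :=
  ∃ f : AG n ≃ᵃ[ZMod 3] AG n, C.map f.toEquiv.toEmbedding = D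

theorem AffinelyEquivalent.trans (hCD : AffinelyEquivalent C D) (hDE : AffinelyEquivalent D E) :
    AffinelyEquivalent C E := by
  obtain ⟨f, rfl⟩ := hCD
  obtain ⟨g, rfl⟩ := hDE
  refine ⟨f.trans g, ?_⟩
  rw [map_map]
  rfl

theorem AffinelyEquivalent.isCap (h : AffinelyEquivalent C D) (hC : IsCap C) : IsCap D := by
  obtain ⟨f, rfl⟩ := h
  exact hC.map f

theorem AffinelyEquivalent.card_eq (h : AffinelyEquivalent C D) : #D = #C := by
  obtain ⟨f, rfl⟩ := h
  exact card_map _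

end AffineEquivalence

section Moments

theorem sum_choose_card_fiber {α ι : Type*} [Fintype ι] [DecidableEq ι] (C : Finset α) (φ : α → ι)
    (k : ℕ) :
    ∑ c, (#{x ∈ C | φ x = c}).choose (k + 1) =
      #{T ∈ C.powersetCard (k + 1) | ∀ x ∈ T, ∀ y ∈ T, φ x = φ y} := by
  classical
  simp only [← card_powersetCard]
  rw [← card_biUnion]
  · congr 1
    ext T
    simp only [mem_biUnion, mem_univ, true_and, mem_powersetCard, mem_filter]
    constructor
    · rintro ⟨c, hT, hcard⟩
      refine ⟨⟨hT.trans (filter_subset _ _), hcard⟩, fun x hx y hy => ?_⟩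
      exact (mem_filter.1 (hT hx)).2.trans (mem_filter.1 (hT hy)).2.symm
    · rintro ⟨⟨hT, hcard⟩, hconst⟩
      obtain ⟨x, hx⟩ : T.Nonempty := card_pos.1 (by omega)
      exact ⟨φ x, fun y hy => mem_filter.2 ⟨hT hy, hconst y hy x hx⟩, hcard⟩
  · refine fun c _ d _ hcd => disjoint_left.2 fun T hTc hTd => hcd ?_
    rw [mem_powersetCard] at hTc hTd
    obtain ⟨x, hx⟩ : T.Nonempty := card_pos.1 (by omega)
    exact (mem_filter.1 (hTc.1 hx)).2.symm.trans (mem_filter.1 (hTd.1 hx)).2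

variable {K V : Type*} [Field K] [Fintype K] [DecidableEq K] [AddCommGroup V] [Module K V]
  [FiniteDimensional K V] [Fintype (Dual K V)]

theorem card_dual_constant_on {T : Finset V} {k : ℕ} (hT : AffineIndependent K ((↑) : T → V))
    (hcard : #T = k + 1) :
    #{φ : Dual K V | ∀ x ∈ T, ∀ y ∈ T, φ x = φ y} = Fintype.card K ^ (finrank K V - k) := by
  set W := vectorSpan K (T : Set V)
  have mem_annihilator (φ : Dual K V) :
      φ ∈ W.dualAnnihilator ↔ ∀ x ∈ T, ∀ y ∈ T, φ x = φ y := by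
    change φ ∈ (Submodule.span K ((T : Set V) -ᵥ T)).dualAnnihilator ↔ _
    rw [Submodule.mem_dualAnnihilator]
    change Submodule.span K ((T : Set V) -ᵥ T) ≤ LinearMap.ker φ ↔ _
    simp only [Submodule.span_le, Set.vsub_subset_iff, vsub_eq_sub, SetLike.mem_coe,
      LinearMap.mem_ker, map_sub, sub_eq_zero]
  have finrank_span : finrank K W = k := by
    have := hT.finrank_vectorSpan (by simpa using hcard)
    rwa [Subtype.range_coe_subtype] at this
  have finrank_annihilator : finrank K W.dualAnnihilator = finrank K V - k := by
    have := Subspace.finrank_add_finrank_dualAnnihilator_eq W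
    omega
  calc #{φ : Dual K V | ∀ x ∈ T, ∀ y ∈ T, φ x = φ y}
      = Nat.card W.dualAnnihilator := by
        rw [← Fintype.card_subtype, ← Nat.card_eq_fintype_card]
        exact Nat.card_congr (Equiv.subtypeEquivRight fun φ => (mem_annihilator φ).symm)
    _ = Fintype.card K ^ (finrank K V - k) := by
        rw [Module.natCard_eq_pow_finrank (K := K), finrank_annihilator, Nat.card_eq_fintype_card]

theorem sum_dual_choose_card_fiber {C : Finset V} {k : ℕ}
    (hC : ∀ T ∈ C.powersetCard (k + 1), AffineIndependent K ((↑) : T → V)) :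
    ∑ φ : Dual K V, ∑ c, (#{x ∈ C | φ x = c}).choose (k + 1) =
      (#C).choose (k + 1) * Fintype.card K ^ (finrank K V - k) := by
  calc ∑ φ : Dual K V, ∑ c, (#{x ∈ C | φ x = c}).choose (k + 1)
      = ∑ φ : Dual K V, #{T ∈ C.powersetCard (k + 1) | ∀ x ∈ T, ∀ y ∈ T, φ x = φ y} :=
        sum_congr rfl fun φ _ => sum_choose_card_fiber C φ k
    _ = ∑ T ∈ C.powersetCard (k + 1), #{φ : Dual K V | ∀ x ∈ T, ∀ y ∈ T, φ x = φ y} :=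
        sum_card_bipartiteAbove_eq_sum_card_bipartiteBelow _
    _ = ∑ _T ∈ C.powersetCard (k + 1), Fintype.card K ^ (finrank K V - k) :=
        sum_congr rfl fun T hT => card_dual_constant_on (hC T hT) (mem_powersetCard.1 hT).2
    _ = (#C).choose (k + 1) * Fintype.card K ^ (finrank K V - k) := by
        rw [sum_const, card_powersetCard, smul_eq_mul]

end Moments

section CapMoments

variable {n : ℕ}

theorem affineIndependent_of_card_eq_two {K V : Type*} [DivisionRing K] [AddCommGroup V]
    [Module K V] {T : Finset V} (hT : #T = 2) : AffineIndependent K ((↑) : T → V) := by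
  classical
  obtain ⟨x, y, hxy, rfl⟩ := card_eq_two.1 hT
  have coe_eq_range : (({x, y} : Finset V) : Set V) = Set.range ![x, y] := by
    simp only [coe_insert, coe_singleton, Matrix.range_cons, Matrix.range_empty,
      Set.singleton_union, insert_empty_eq]
  change AffineIndependent K ((↑) : (({x, y} : Finset V) : Set V) → V)
  rw [coe_eq_range]
  exact (affineIndependent_of_ne K hxy).range

theorem IsCap.affineIndependent {T : Finset (AG n)} (hT : IsCap T) (hcard : #T = 3) :
    AffineIndependent (ZMod 3) ((↑) : T → AG n) := by
  obtain ⟨x, y, z, hxy, hxz, hyz, rfl⟩ := card_eq_three.1 hcard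
  have coe_eq_range : (({x, y, z} : Finset (AG n)) : Set (AG n)) = Set.range ![x, y, z] := by
    simp only [coe_insert, coe_singleton, Matrix.range_cons, Matrix.range_empty,
      Set.singleton_union, insert_empty_eq]
  change AffineIndependent (ZMod 3) ((↑) : (({x, y, z} : Finset (AG n)) : Set (AG n)) → AG n)
  rw [coe_eq_range]
  refine (affineIndependent_iff_not_collinear_set.2 fun hcol => ?_).range
  obtain ⟨v, hv⟩ := (collinear_iff_of_mem (p₀ := x) (by simp)).1 hcol
  obtain ⟨r, hr⟩ := hv y (by simp)
  obtain ⟨s, hs⟩ := hv z (by simp)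
  have nonzero_distinct_sum : ∀ a b : ZMod 3, a ≠ 0 → b ≠ 0 → a ≠ b → a + b = 0 := by decide
  have hrs : r + s = 0 :=
    nonzero_distinct_sum r s (by rintro rfl; simp_all) (by rintro rfl; simp_all)
      (by rintro rfl; simp_all)
  refine hT x (by simp) y (by simp) z (by simp) hxy hxz hyz (funext fun i => ?_)
  have three_eq_zero : (3 : ZMod 3) = 0 := rfl
  simp only [hr, hs, vadd_eq_add, Pi.add_apply, Pi.smul_apply, smul_eq_mul, Pi.zero_apply]
  linear_combination v i * hrs + x i * three_eq_zero

/-- The hypothesis on `a`, `b` and `d` says that the sum of the weights over all functionals exceeds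
the weight of `0`: each pair of points lies in a common fibre of `3 ^ (n + 1)` functionals, each
triple in one of `3 ^ n`. -/
theorem IsCap.exists_dual_weight_pos {C : Finset (AG (n + 2))} (hC : IsCap C) (a b d : ℤ)
    (h : 0 < a * ((#C).choose 2 * (3 ^ (n + 1) - 1)) + b * ((#C).choose 3 * (3 ^ n - 1)) +
      d * (3 ^ (n + 2) - 1)) :
    ∃ φ : Dual (ZMod 3) (AG (n + 2)), φ ≠ 0 ∧
      0 < a * ∑ c, (#{x ∈ C | φ x = c}).choose 2 + b * ∑ c, (#{x ∈ C | φ x = c}).choose 3 + d := by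
  classical
  have := Module.finite_of_finite (ZMod 3) (M := Dual (ZMod 3) (AG (n + 2)))
  let := Fintype.ofFinite (Dual (ZMod 3) (AG (n + 2)))
  have pairs := sum_dual_choose_card_fiber (K := ZMod 3) (k := 1) (C := C) fun _ hT =>
    affineIndependent_of_card_eq_two (mem_powersetCard.1 hT).2
  have triples := sum_dual_choose_card_fiber (k := 2) (C := C) fun _ hT =>
    (hC.mono (mem_powersetCard.1 hT).1).affineIndependent (mem_powersetCard.1 hT).2
  set weight : Dual (ZMod 3) (AG (n + 2)) → ℤ := fun φ =>
    a * ∑ c, (#{x ∈ C | φ x = c}).choose 2 + b * ∑ c, (#{x ∈ C | φ x = c}).choose 3 + d with hw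
  have weight_zero : weight 0 = a * (#C).choose 2 + b * (#C).choose 3 + d := by
    have choose_zero (k : ℕ) :
        ∑ c, (#{x ∈ C | (0 : Dual (ZMod 3) (AG (n + 2))) x = c}).choose (k + 1) =
          (#C).choose (k + 1) := (sum_choose_card_fiber C _ k).trans (by simp)
    simp only [hw, choose_zero 1, choose_zero 2]
  have card_dual : Fintype.card (Dual (ZMod 3) (AG (n + 2))) = 3 ^ (n + 2) := by
    rw [Module.card_eq_pow_finrank (K := ZMod 3), Subspace.dual_finrank_eq, finrank_fin_fun,
      ZMod.card]
  have sum_weight : ∑ φ, weight φ =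
      a * ((#C).choose 2 * 3 ^ (n + 1)) + b * ((#C).choose 3 * 3 ^ n) +
        d * 3 ^ (n + 2) := by
    simp only [hw, sum_add_distrib, ← mul_sum, ← Nat.cast_sum, pairs, triples, sum_const,
      card_univ, card_dual, finrank_fin_fun, ZMod.card, Nat.add_sub_cancel, Nat.add_succ_sub_one]
    push_cast
    ring
  by_contra! hle
  have := sum_nonpos fun φ (hφ : φ ∈ univ.erase 0) => hle φ (ne_of_mem_erase hφ)
  have := add_sum_erase univ weight (mem_univ 0)
  linarith

end CapMoments

section Layers

variable {n : ℕ} {C D : Finset (AG (n + 1))}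

/-- The section of a point set of `AG(n+1,3)` by the hyperplane on which the first coordinate is
`t`, as a point set of `AG(n,3)`. -/
def layer (C : Finset (AG (n + 1))) (t : ZMod 3) : Finset (AG n) :=
  {u | Matrix.vecCons t u ∈ C}

theorem mem_layer {t : ZMod 3} {u : AG n} : u ∈ layer C t ↔ Matrix.vecCons t u ∈ C := by
  simp [layer]

theorem eq_of_layer_eq (h0 : layer C 0 = layer D 0) (h1 : layer C 1 = layer D 1)
    (h2 : layer C 2 = layer D 2) : C = D := by
  have h : ∀ t : ZMod 3, layer C t = layer D t := Fin.forall_fin_succ.2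
    ⟨h0, Fin.forall_fin_two.2 ⟨h1, h2⟩⟩
  ext x
  rw [← Matrix.cons_head_tail x, ← mem_layer, ← mem_layer, h]

theorem card_layer (C : Finset (AG (n + 1))) (t : ZMod 3) : #(layer C t) = #{x ∈ C | x 0 = t} := by
  refine card_nbij' (Matrix.vecCons t) Matrix.vecTail (fun u hu => ?_) (fun x hx => ?_)
    (fun u _ => Matrix.tail_cons t u) (fun x hx => ?_)
  · simpa [mem_layer] using hu
  all_goals
    simp only [coe_filter, Set.mem_ofPred_eq] at hx
    have hcons : Matrix.vecCons t (Matrix.vecTail x) = x := hx.2 ▸ Matrix.cons_head_tail x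
    first | exact hcons | simpa [mem_layer, hcons] using hx.1

theorem IsCap.neg_add_notMem_layer (hC : IsCap C) {s t : ZMod 3} {u v : AG n}
    (hu : u ∈ layer C s) (hv : v ∈ layer C t) (hne : s ≠ t ∨ u ≠ v) :
    -(u + v) ∉ layer C (-(s + t)) := by
  rw [mem_layer] at *
  have cons_neg_add : Matrix.vecCons (-(s + t)) (-(u + v)) =
      -(Matrix.vecCons s u + Matrix.vecCons t v) := by simp
  rw [cons_neg_add]
  refine isCap_iff_neg_add_notMem.1 hC _ hu _ hv fun h => ?_
  obtain ⟨hst, huv⟩ := Matrix.vecCons_inj.1 h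
  exact hne.elim (· hst) (· huv)

theorem isCap_layer (hC : IsCap C) (t : ZMod 3) : IsCap (layer C t) := by
  refine isCap_iff_neg_add_notMem.2 fun u hu v hv huv => ?_
  have three_mul_eq_zero : ∀ t : ZMod 3, -(t + t) = t := by decide
  exact three_mul_eq_zero t ▸ hC.neg_add_notMem_layer hu hv (.inr huv)

/-- The points not collinear with a point of `A` and a point of `Z`: where the third of three
parallel sections of a cap can lie once the first two are `A` and `Z`. -/
def thirdLayer (A Z : Finset (AG n)) : Finset (AG n) :=
  {z | ∀ u ∈ Z, -(z + u) ∉ A}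

theorem IsCap.layer_two_subset (hC : IsCap C) :
    layer C 2 ⊆ thirdLayer (layer C 1) (layer C 0) := by
  intro z hz
  have third_height : (-(2 + 0) : ZMod 3) = 1 := by decide
  refine (mem_filter_univ z).2 fun u hu => ?_
  rw [← third_height]
  exact hC.neg_add_notMem_layer hz hu (.inl (by decide))

theorem exists_linearEquiv_apply_zero {K : Type*} [Field K] {φ : Dual K (Fin (n + 1) → K)}
    (hφ : φ ≠ 0) : ∃ e : (Fin (n + 1) → K) ≃ₗ[K] (Fin (n + 1) → K), ∀ x, e x 0 = φ x := by
  have finrank_ker : finrank K (LinearMap.ker φ) = finrank K (Fin n → K) := by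
    have := Dual.finrank_ker_add_one_of_ne_zero hφ
    rw [finrank_fin_fun] at *
    omega
  let ker_coords := LinearEquiv.ofFinrankEq _ _ finrank_ker
  obtain ⟨proj, hproj⟩ :=
    (LinearMap.ker φ).subtype.exists_leftInverse_of_injective (Submodule.ker_subtype _)
  let f := φ.vecCons (ker_coords.toLinearMap ∘ₗ proj)
  have f_injective : Function.Injective f := by
    refine (injective_iff_map_eq_zero f).2 fun x hx => ?_
    have hφx : φ x = 0 := congrFun hx 0
    have hprojx : proj x = 0 := by
      refine ker_coords.map_eq_zero_iff.1 (funext fun i => ?_)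
      exact congrFun hx i.succ
    have := LinearMap.congr_fun hproj ⟨x, hφx⟩
    simpa [hprojx, Subtype.ext_iff, eq_comm] using this
  exact ⟨LinearEquiv.ofInjectiveEndo f f_injective, fun x => rfl⟩

theorem exists_card_layer_map_eq {φ : Dual (ZMod 3) (AG (n + 1))} (hφ : φ ≠ 0) (c : ZMod 3) :
    ∃ f : AG (n + 1) ≃ᵃ[ZMod 3] AG (n + 1), ∀ (C : Finset (AG (n + 1))) (t : ZMod 3),
      #(layer (C.map f.toEquiv.toEmbedding) t) = #{x ∈ C | φ x = c + t} := by
  obtain ⟨e, he⟩ := exists_linearEquiv_apply_zero hφ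
  refine ⟨e.toAffineEquiv.trans (AffineEquiv.constVAdd (ZMod 3) _ fun _ => -c), fun C t => ?_⟩
  rw [card_layer, filter_map, card_map]
  congr 1
  refine filter_congr fun x _ => ?_
  simp [he, neg_add_eq_iff_eq_add]

/-- The lift of an affine automorphism `f` to one dimension more that acts as `f` on the hyperplane
at height `1` and as `f`, translated so that `p` is sent to the origin, on the hyperplane at height
`0`. -/
def liftAffine (f : AG n ≃ᵃ[ZMod 3] AG n) (p : AG n) : AG (n + 1) ≃ᵃ[ZMod 3] AG (n + 1) :=
  let cons := Fin.consLinearEquiv (ZMod 3) fun _ : Fin (n + 1) => ZMod 3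
  (cons.symm.trans <| ((LinearEquiv.refl (ZMod 3) (ZMod 3)).skewProd f.linear
    (LinearMap.toSpanSingleton (ZMod 3) (AG n) (f p))).trans cons).toAffineEquiv.trans
    (AffineEquiv.constVAdd (ZMod 3) (AG (n + 1)) (Matrix.vecCons 0 (f 0 - f p)))

theorem liftAffine_cons (f : AG n ≃ᵃ[ZMod 3] AG n) (p : AG n) (t : ZMod 3) (u : AG n) :
    liftAffine f p (Matrix.vecCons t u) = Matrix.vecCons t (f u + (t - 1) • f p) := by
  change Matrix.vecCons 0 (f 0 - f p) + Matrix.vecCons t (f.linear u + t • f p) = _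
  have decomp : f u = f.linear u + f 0 := congrFun f.toAffineMap.decomp u
  rw [Matrix.cons_add_cons, zero_add, decomp]
  congr 1
  module

end Layers

section LayerCards

variable {n : ℕ}

theorem card_eq_sum_card_layer (C : Finset (AG (n + 1))) :
    #C = #(layer C 0) + #(layer C 1) + #(layer C 2) := by
  simp only [card_layer]
  rw [card_eq_sum_card_fiberwise (f := fun x => x 0) (t := univ) (fun _ _ => mem_univ _)]
  exact Fin.sum_univ_three _

theorem IsCap.card_filter_dual_le {C : Finset (AG (n + 1))} (hC : IsCap C) {M : ℕ}
    (hM : ∀ D : Finset (AG n), IsCap D → #D ≤ M) {φ : Dual (ZMod 3) (AG (n + 1))} (hφ : φ ≠ 0)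
    (c : ZMod 3) : #{x ∈ C | φ x = c} ≤ M := by
  obtain ⟨f, hf⟩ := exists_card_layer_map_eq hφ c
  have := hf C 0
  rw [add_zero] at this
  exact this ▸ hM _ (isCap_layer (hC.map f) 0)

/-- The weight of three parallel hyperplanes carrying `x`, `y` and `z` points, in which every pair
of points in a common hyperplane counts `a` and every such triple `b`, shifted by `d`. -/
def layerWeight (a b d : ℤ) (x y z : ℕ) : ℤ :=
  a * (x.choose 2 + y.choose 2 + z.choose 2 : ℕ) +
    b * (x.choose 3 + y.choose 3 + z.choose 3 : ℕ) + d

theorem IsCap.exists_layer_cards {C : Finset (AG (n + 2))} (hC : IsCap C) {M : ℕ}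
    (hM : ∀ D : Finset (AG (n + 1)), IsCap D → #D ≤ M) (a b d : ℤ)
    (h : 0 < a * ((#C).choose 2 * (3 ^ (n + 1) - 1)) + b * ((#C).choose 3 * (3 ^ n - 1)) +
      d * (3 ^ (n + 2) - 1)) :
    ∃ m : ZMod 3 → ℕ, (∀ c, m c ≤ M) ∧ m 0 + m 1 + m 2 = #C ∧
      0 < layerWeight a b d (m 0) (m 1) (m 2) ∧
      ∀ c, ∃ D, AffinelyEquivalent C D ∧ ∀ t, #(layer D t) = m (c + t) := by
  obtain ⟨φ, hφ, hpos⟩ := hC.exists_dual_weight_pos a b d h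
  have exists_map (c : ZMod 3) :
      ∃ D, AffinelyEquivalent C D ∧ ∀ t, #(layer D t) = #{x ∈ C | φ x = c + t} :=
    let ⟨f, hf⟩ := exists_card_layer_map_eq hφ c
    ⟨_, ⟨f, rfl⟩, hf C⟩
  have sum_zmod (g : ZMod 3 → ℕ) : ∑ c, g c = g 0 + g 1 + g 2 := Fin.sum_univ_three g
  refine ⟨fun c => #{x ∈ C | φ x = c}, hC.card_filter_dual_le hM hφ, ?_, ?_, exists_map⟩
  · exact (sum_zmod _).symm.trans (card_eq_sum_card_fiberwise fun _ _ => mem_univ _).symm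
  · simpa only [layerWeight, sum_zmod] using hpos

theorem IsCap.exists_card_layer_eq {C : Finset (AG (n + 2))} (hC : IsCap C) {M : ℕ}
    (hM : ∀ D : Finset (AG (n + 1)), IsCap D → #D ≤ M) (a b d : ℤ)
    (h : 0 < a * ((#C).choose 2 * (3 ^ (n + 1) - 1)) + b * ((#C).choose 3 * (3 ^ n - 1)) +
      d * (3 ^ (n + 2) - 1)) {j k : ℕ}
    (profile : ∀ x ≤ M, ∀ y ≤ M, ∀ z ≤ M, x + y + z = #C → 0 < layerWeight a b d x y z →
      (x, y, z) ∈ [(j, k, k), (k, j, k), (k, k, j)]) :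
    ∃ D, AffinelyEquivalent C D ∧ #(layer D 0) = j ∧ #(layer D 1) = k ∧ #(layer D 2) = k := by
  obtain ⟨m, hle, hsum, hpos, hm⟩ := hC.exists_layer_cards hM a b d h
  obtain ⟨c, h0, h1, h2⟩ : ∃ c, m (c + 0) = j ∧ m (c + 1) = k ∧ m (c + 2) = k := by
    have := profile _ (hle 0) _ (hle 1) _ (hle 2) hsum hpos
    simp only [List.mem_cons, List.not_mem_nil, or_false, Prod.mk.injEq] at this
    rcases this with ⟨h0, h1, h2⟩ | ⟨h0, h1, h2⟩ | ⟨h0, h1, h2⟩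
    exacts [⟨0, h0, h1, h2⟩, ⟨1, h1, h2, h0⟩, ⟨2, h2, h0, h1⟩]
  obtain ⟨D, hCD, hD⟩ := hm c
  exact ⟨D, hCD, (hD 0).trans h0, (hD 1).trans h1, (hD 2).trans h2⟩

theorem exists_affinelyEquivalent_layer_one_eq {C : Finset (AG (n + 1))} {A : Finset (AG n)}
    (h : AffinelyEquivalent (layer C 1) A) (p : AG n) :
    ∃ D, AffinelyEquivalent C D ∧ layer D 1 = A ∧ #(layer D 2) = #(layer C 2) ∧
      ∃ e : AG n ≃ᵃ[ZMod 3] AG n, e p = 0 ∧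
        layer D 0 = (layer C 0).map e.toEquiv.toEmbedding := by
  obtain ⟨f, hf⟩ := h
  have mem_layer_map (t : ZMod 3) (u : AG n) :
      f u + (t - 1) • f p ∈ layer (C.map (liftAffine f p).toEquiv.toEmbedding) t ↔
        u ∈ layer C t := by
    rw [mem_layer, mem_layer, ← liftAffine_cons]
    exact mem_map' _
  set D := C.map (liftAffine f p).toEquiv.toEmbedding
  set e := f.trans (AffineEquiv.constVAdd (ZMod 3) _ (-f p))
  have hCD : AffinelyEquivalent C D := ⟨liftAffine f p, rfl⟩
  have layer_one : layer D 1 = A := by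
    rw [← hf]
    ext v
    obtain ⟨u, rfl⟩ := f.surjective v
    refine Iff.trans ?_ (mem_map' _).symm
    rw [← mem_layer_map, sub_self, zero_smul, add_zero]
  have layer_zero : layer D 0 = (layer C 0).map e.toEquiv.toEmbedding := by
    ext v
    obtain ⟨u, rfl⟩ := e.surjective v
    refine Iff.trans ?_ (mem_map' _).symm
    rw [← mem_layer_map, zero_sub, neg_one_smul, add_comm]
    rfl
  refine ⟨D, hCD, layer_one, ?_, e, neg_add_cancel _, layer_zero⟩
  have := hCD.card_eq
  rw [card_eq_sum_card_layer, card_eq_sum_card_layer C, layer_one, layer_zero, card_map, ← hf,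
    card_map] at this
  exact Nat.add_left_cancel this

theorem exists_affinelyEquivalent_layer_zero_eq_singleton {C : Finset (AG (n + 1))}
    {A : Finset (AG n)} (h : AffinelyEquivalent (layer C 1) A) (hcard : #(layer C 0) = 1) :
    ∃ D, AffinelyEquivalent C D ∧ layer D 1 = A ∧ #(layer D 2) = #(layer C 2) ∧
      layer D 0 = {0} := by
  obtain ⟨p, hp⟩ := card_eq_one.1 hcard
  obtain ⟨D, hCD, hA, hD_two, e, he, hD⟩ := exists_affinelyEquivalent_layer_one_eq h p
  refine ⟨D, hCD, hA, hD_two, hD.trans ?_⟩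
  rw [hp, map_singleton, ← he]
  rfl

theorem exists_affinelyEquivalent_layer_zero_eq_pair {C : Finset (AG (n + 1))}
    {A : Finset (AG n)} (h : AffinelyEquivalent (layer C 1) A) (hcard : #(layer C 0) = 2) :
    ∃ D, AffinelyEquivalent C D ∧ layer D 1 = A ∧ #(layer D 2) = #(layer C 2) ∧
      ∃ q ≠ 0, layer D 0 = {q, -q} := by
  obtain ⟨x, y, hxy, hlayer⟩ := card_eq_two.1 hcard
  obtain ⟨D, hCD, hA, hD_two, e, he, hD⟩ := exists_affinelyEquivalent_layer_one_eq h (-(x + y))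
  have he_neg : e y = -e x := by
    have := affineMap_add_add e.toAffineMap x y (-(x + y))
    rw [add_neg_cancel, map_zero] at this
    exact eq_neg_of_add_eq_zero_right (by simpa only [AffineEquiv.coe_toAffineMap, he, add_zero])
  refine ⟨D, hCD, hA, hD_two, e x, fun hx => hxy (e.injective ?_), hD.trans ?_⟩
  · rw [he_neg, hx, neg_zero]
  · rw [hlayer, map_insert, map_singleton, ← he_neg]
    rfl

end LayerCards

section Classification

set_option synthInstance.maxSize 1000

theorem IsCap.card_le_of_forall_card_ne {n N : ℕ}
    (h : ∀ D : Finset (AG n), IsCap D → #D ≠ N + 1) {C : Finset (AG n)} (hC : IsCap C) :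
    #C ≤ N := by
  by_contra! hlt
  obtain ⟨D, hDC, hD⟩ := exists_subset_card_eq hlt
  exact h D (hC.mono hDC) hD

theorem IsCap.card_le_two {C : Finset (AG 1)} (hC : IsCap C) : #C ≤ 2 := by
  decide +revert

theorem IsCap.card_le_four {C : Finset (AG 2)} (hC : IsCap C) : #C ≤ 4 := by
  refine hC.card_le_of_forall_card_ne fun D hD hcard => ?_
  obtain ⟨m, hle, hsum, hpos, -⟩ :=
    hD.exists_layer_cards (fun _ => IsCap.card_le_two) 1 0 (-2) (by rw [hcard]; decide)
  have no_profile : ∀ x ≤ 2, ∀ y ≤ 2, ∀ z ≤ 2, x + y + z = 5 →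
      ¬ 0 < layerWeight 1 0 (-2) x y z := by decide
  exact no_profile _ (hle 0) _ (hle 1) _ (hle 2) (hsum.trans hcard) hpos

theorem IsCap.card_le_nine {C : Finset (AG 3)} (hC : IsCap C) : #C ≤ 9 := by
  refine hC.card_le_of_forall_card_ne fun D hD hcard => ?_
  obtain ⟨m, hle, hsum, hpos, -⟩ :=
    hD.exists_layer_cards (fun _ => IsCap.card_le_four) 1 0 (-13) (by rw [hcard]; decide)
  have no_profile : ∀ x ≤ 4, ∀ y ≤ 4, ∀ z ≤ 4, x + y + z = 10 →
      ¬ 0 < layerWeight 1 0 (-13) x y z := by decide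
  exact no_profile _ (hle 0) _ (hle 1) _ (hle 2) (hsum.trans hcard) hpos

/-- The conic `x² + y² = 1`, the model of the largest caps of `AG(2,3)`. -/
def circle : Finset (AG 2) := {v | v 0 ^ 2 + v 1 ^ 2 = 1}

/-- The elliptic paraboloid `x = y² + z²`, the model of the largest caps of `AG(3,3)`. -/
def paraboloid : Finset (AG 3) := {v | v 0 = v 1 ^ 2 + v 2 ^ 2}

/-- The equation `xy = z² + w²` of the quadric cone, for points other than the vertex. -/
def OnCone (v : AG 4) : Prop := v ≠ 0 ∧ v 0 * v 1 = v 2 ^ 2 + v 3 ^ 2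

instance : DecidablePred OnCone := fun _ => inferInstanceAs (Decidable (_ ∧ _))

/-- The quadric cone `xy = z² + w²` without its vertex, the model of the largest caps of
`AG(4,3)`. -/
def cone : Finset (AG 4) := {v | OnCone v}

theorem IsCap.affinelyEquivalent_circle {C : Finset (AG 2)} (hC : IsCap C) (hcard : #C = 4) :
    AffinelyEquivalent C circle := by
  obtain ⟨D, hCD, h0, h1, h2⟩ := hC.exists_card_layer_eq (fun _ => IsCap.card_le_two) (-1) 0 2
    (j := 2) (k := 1) (by rw [hcard]; decide) (by rw [hcard]; decide)
  have layer_one : AffinelyEquivalent (layer D 1) {0} := by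
    obtain ⟨p, hp⟩ := card_eq_one.1 h1
    exact ⟨AffineEquiv.constVAdd (ZMod 3) _ (-p), by simp [hp]⟩
  obtain ⟨E, hDE, hE1, hE2, q, hq, hE0⟩ :=
    exists_affinelyEquivalent_layer_zero_eq_pair layer_one h0
  have hCE := hCD.trans hDE
  have pair_eq : ∀ q : AG 1, q ≠ 0 → {q, -q} = layer circle 0 := by decide
  have thirdLayer_eq : thirdLayer {(0 : AG 1)} (layer circle 0) = layer circle 2 := by decide
  have hE_two := (hCE.isCap hC).layer_two_subset
  rw [hE1, hE0, pair_eq q hq, thirdLayer_eq] at hE_two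
  have hE : E = circle := eq_of_layer_eq (hE0.trans (pair_eq q hq)) (hE1.trans (by decide))
    (eq_of_subset_of_card_le hE_two (by rw [hE2, h2]; decide))
  exact hE ▸ hCE

theorem IsCap.affinelyEquivalent_paraboloid {C : Finset (AG 3)} (hC : IsCap C) (hcard : #C = 9) :
    AffinelyEquivalent C paraboloid := by
  obtain ⟨D, hCD, h0, h1, h2⟩ := hC.exists_card_layer_eq (fun _ => IsCap.card_le_four) 1 0 (-11)
    (j := 1) (k := 4) (by rw [hcard]; decide) (by rw [hcard]; decide)
  have layer_one := (isCap_layer (hCD.isCap hC) 1).affinelyEquivalent_circle h1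
  obtain ⟨E, hDE, hE1, hE2, hE0⟩ :=
    exists_affinelyEquivalent_layer_zero_eq_singleton layer_one h0
  have hCE := hCD.trans hDE
  have hE_cap := hCE.isCap hC
  have hE_two := hE_cap.layer_two_subset
  rw [hE1, hE0] at hE_two
  have only_cap : ∀ B ∈ (thirdLayer circle {0}).powersetCard 4,
      IsCap B → B = layer paraboloid 2 := by
    decide +kernel
  have hE : E = paraboloid := eq_of_layer_eq (hE0.trans (by decide)) (hE1.trans (by decide))
    (only_cap _ (mem_powersetCard.2 ⟨hE_two, hE2.trans h2⟩) (isCap_layer hE_cap 2))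
  exact hE ▸ hCE

theorem IsCap.card_lt_nine_of_subset_thirdLayer {B : Finset (AG 3)} (hB : IsCap B) {q : AG 3}
    (hq : q 1 ≠ 0 ∨ q 2 ≠ 0) (hsub : B ⊆ thirdLayer paraboloid {q, -q}) : #B < 9 := by
  have exists_plane : ∀ q : AG 3, q 1 ≠ 0 ∨ q 2 ≠ 0 → ∃ b c d : ZMod 3,
      #{z ∈ thirdLayer paraboloid {q, -q} | ¬ z 0 + b * z 1 + c * z 2 = d} ≤ 5 ∧
      ¬ IsCap {z ∈ thirdLayer paraboloid {q, -q} | ¬ z 0 + b * z 1 + c * z 2 = d} := by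
    decide +kernel
  obtain ⟨b, c, d, card_off, off_not_cap⟩ := exists_plane q hq
  let φ : Dual (ZMod 3) (AG 3) := LinearMap.proj 0 + b • LinearMap.proj 1 + c • LinearMap.proj 2
  have hφ : φ ≠ 0 := fun h => by
    simpa [φ] using LinearMap.congr_fun h (Pi.single 0 1)
  have card_plane : #{z ∈ B | φ z = d} ≤ 4 :=
    hB.card_filter_dual_le (fun _ => IsCap.card_le_four) hφ d
  have card_off_plane : #{z ∈ B | ¬ φ z = d} < 5 := by
    have hB_off := filter_subset_filter (fun z => ¬ φ z = d) hsub
    refine (card_lt_card (hB_off.ssubset_of_ne fun h => off_not_cap ?_)).trans_le card_off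
    exact h ▸ hB.mono (filter_subset _ _)
  have := card_filter_add_card_filter_not (s := B) fun z => φ z = d
  omega

theorem IsCap.affinelyEquivalent_cone {C : Finset (AG 4)} (hC : IsCap C) (hcard : #C = 20) :
    AffinelyEquivalent C cone := by
  -- The weight with these coefficients vanishes at the profiles `(3, 8, 9)` and `(6, 7, 7)`.
  obtain ⟨D, hCD, h0, h1, h2⟩ :=
    hC.exists_card_layer_eq (fun _ => IsCap.card_le_nine) 51 (-10) (-2007)
      (j := 2) (k := 9) (by rw [hcard]; decide) (by rw [hcard]; decide +kernel)
  have layer_one := (isCap_layer (hCD.isCap hC) 1).affinelyEquivalent_paraboloid h1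
  obtain ⟨E, hDE, hE1, hE2, q, hq, hE0⟩ :=
    exists_affinelyEquivalent_layer_zero_eq_pair layer_one h0
  have hCE := hCD.trans hDE
  have hE_cap := hCE.isCap hC
  have hE_two := hE_cap.layer_two_subset
  rw [hE1, hE0] at hE_two
  have vertical : ¬ (q 1 ≠ 0 ∨ q 2 ≠ 0) := fun h =>
    ((isCap_layer hE_cap 2).card_lt_nine_of_subset_thirdLayer h hE_two).ne (hE2.trans h2)
  have pair_eq : ∀ q : AG 3, q ≠ 0 → ¬ (q 1 ≠ 0 ∨ q 2 ≠ 0) → {q, -q} = layer cone 0 := by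
    decide +kernel
  have thirdLayer_eq : thirdLayer paraboloid (layer cone 0) = layer cone 2 := by decide +kernel
  rw [pair_eq q hq vertical, thirdLayer_eq] at hE_two
  have hE : E = cone := eq_of_layer_eq (hE0.trans (pair_eq q hq vertical))
    (hE1.trans (by decide +kernel))
    (eq_of_subset_of_card_le hE_two (by rw [hE2, h2]; decide +kernel))
  exact hE ▸ hCE

theorem isCap_cone : IsCap cone := by
  decide +kernel

theorem card_cone : #cone = 20 := by
  decide +kernel

theorem IsCap.card_le_twenty {C : Finset (AG 4)} (hC : IsCap C) : #C ≤ 20 := by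
  refine hC.card_le_of_forall_card_ne fun D hD hcard => ?_
  obtain ⟨E, hED, hE⟩ := exists_subset_card_eq (show 20 ≤ #D by omega)
  obtain ⟨f, hf⟩ := (hD.mono hED).affinelyEquivalent_cone hE
  have cone_subset : cone ⊆ D.map f.toEquiv.toEmbedding := hf ▸ map_subset_map.2 hED
  have cone_complete : ∀ z ∉ cone, ∃ x ∈ cone, ∃ y ∈ cone, x ≠ y ∧ z = -(x + y) := by
    decide +kernel
  obtain ⟨z, hzD, hz⟩ : ∃ z ∈ D.map f.toEquiv.toEmbedding, z ∉ cone := by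
    refine exists_mem_notMem_of_card_lt_card ?_
    rw [← hf, card_map, card_map]
    omega
  obtain ⟨x, hx, y, hy, hxy, rfl⟩ := cone_complete z hz
  exact isCap_iff_neg_add_notMem.1 (hD.map f) x (cone_subset hx) y (cone_subset hy) hxy hzD

theorem maximalCap_iff {C : Finset (AG 4)} : MaximalCap C ↔ IsCap C ∧ #C = 20 := by
  refine and_congr_right fun hC => ⟨fun h => hC.card_le_twenty.antisymm ?_, fun h D hD => ?_⟩
  · exact card_cone ▸ h cone isCap_cone
  · exact h ▸ hD.card_le_twenty

theorem maximalCap_cone : MaximalCap cone :=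
  maximalCap_iff.2 ⟨isCap_cone, card_cone⟩

theorem MaximalCap.ne_of_disjoint {C D : Finset (AG 4)} (hC : MaximalCap C) (h : Disjoint C D) :
    C ≠ D := by
  rintro rfl
  have := (maximalCap_iff.1 hC).2
  simp [disjoint_self.1 h] at this

end Classification

section QuadraticForms

/-- The monomials of degree two in four coordinates, in lexicographic order. -/
def monomials (v : AG 4) : List (ZMod 3) :=
  [v 0 * v 0, v 0 * v 1, v 0 * v 2, v 0 * v 3, v 1 * v 1, v 1 * v 2, v 1 * v 3,
    v 2 * v 2, v 2 * v 3, v 3 * v 3]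

/-- The dot product of two lists of scalars. -/
def dotList (c w : List (ZMod 3)) : ZMod 3 := (List.zipWith (· * ·) c w).sum

/-- The value at `v` of the quadratic form with coefficient list `c`. -/
def quadEval (c : List (ZMod 3)) (v : AG 4) : ZMod 3 := dotList c (monomials v)

/-- The cone with vertex `a` over the quadric with coefficient list `c`, without its vertex. -/
def coneAt (c : List (ZMod 3)) (a : AG 4) : Finset (AG 4) := {x | x ≠ a ∧ quadEval c (x - a) = 0}

theorem mem_coneAt {c : List (ZMod 3)} {a x : AG 4} :
    x ∈ coneAt c a ↔ x ≠ a ∧ quadEval c (x - a) = 0 := by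
  simp only [coneAt, mem_filter_univ]

theorem quadEval_neg (c : List (ZMod 3)) (v : AG 4) : quadEval c (-v) = quadEval c v := by
  simp only [quadEval, monomials, Pi.neg_apply, neg_mul_neg]

theorem dotList_cons (c : List (ZMod 3)) (x : ZMod 3) (w : List (ZMod 3)) :
    dotList c (x :: w) = c.headD 0 * x + dotList c.tail w := by
  cases c <;> simp [dotList]

theorem dotList_nil (c : List (ZMod 3)) : dotList c [] = 0 := by
  simp [dotList]

theorem dotList_map_neg (c w : List (ZMod 3)) : dotList (c.map Neg.neg) w = -dotList c w := by
  induction w generalizing c with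
  | nil => simp only [dotList_nil, neg_zero]
  | cons x w ih =>
    have headD_map : (c.map Neg.neg).headD 0 = -c.headD 0 := by cases c <;> simp
    rw [dotList_cons, dotList_cons, headD_map, ← List.map_tail, ih]
    ring

theorem quadEval_add_add_quadEval_sub (c : List (ZMod 3)) (u v : AG 4) :
    quadEval c (u + v) + quadEval c (u - v) = 2 * (quadEval c u + quadEval c v) := by
  simp only [quadEval, monomials, dotList_cons, dotList_nil, Pi.add_apply, Pi.sub_apply]
  ring

theorem coneAt_map_neg (c : List (ZMod 3)) (a : AG 4) : coneAt (c.map Neg.neg) a = coneAt c a := by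
  ext x
  simp only [mem_coneAt, quadEval, dotList_map_neg, neg_eq_zero]

theorem exists_quadEval_eq (B : Matrix (Fin 4) (Fin 4) (ZMod 3)) :
    ∃ c : List (ZMod 3), c.length = 10 ∧ ∀ v, quadEval c v = ∑ i, ∑ j, B i j * (v i * v j) := by
  refine ⟨[B 0 0, B 0 1 + B 1 0, B 0 2 + B 2 0, B 0 3 + B 3 0, B 1 1, B 1 2 + B 2 1,
    B 1 3 + B 3 1, B 2 2, B 2 3 + B 3 2, B 3 3], rfl, fun v => ?_⟩
  simp only [quadEval, monomials, dotList_cons, dotList_nil, List.headD_cons, List.tail_cons,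
    Fin.sum_univ_four]
  ring

theorem exists_eq_coneAt {D : Finset (AG 4)} (h : AffinelyEquivalent D cone) :
    ∃ c a, c.length = 10 ∧ D = coneAt c a := by
  obtain ⟨f, hf⟩ := h
  let a := f.symm 0
  let M := LinearMap.toMatrix' f.linear.toLinearMap
  have apply_eq (x : AG 4) (i : Fin 4) : f x i = ∑ j, M i j * (x - a) j := by
    have h : f x = M.mulVec (x - a) := by
      rw [← Matrix.toLin'_apply, Matrix.toLin'_toMatrix']
      simpa [a] using (f.toAffineMap.linearMap_vsub x a).symm
    exact congrFun h i
  obtain ⟨c, hlen, hc⟩ :=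
    exists_quadEval_eq fun i j => M 0 i * M 1 j - M 2 i * M 2 j - M 3 i * M 3 j
  refine ⟨c, a, hlen, ?_⟩
  ext x
  have form_eq : quadEval c (x - a) = f x 0 * f x 1 - (f x 2 ^ 2 + f x 3 ^ 2) := by
    simp only [hc, apply_eq, Fin.sum_univ_four]
    ring
  have mem_iff : x ∈ D ↔ f x ∈ cone := by simp [← hf]
  rw [mem_coneAt, form_eq, sub_eq_zero, mem_iff, cone, mem_filter_univ]
  exact and_congr_left' (not_congr f.toEquiv.eq_symm_apply.symm)

theorem isCap_coneAt_iff {c : List (ZMod 3)} {a : AG 4} :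
    IsCap (coneAt c a) ↔ ∀ u v : AG 4, u ≠ 0 → v ≠ 0 → u ≠ v → u + v ≠ 0 →
      quadEval c u = 0 → quadEval c v = 0 → quadEval c (u + v) ≠ 0 := by
  have third_sub (x y : AG 4) : -(x + y) - a = -((x - a) + (y - a)) := by
    have three_eq_zero : (3 : AG 4) = 0 := rfl
    linear_combination -a * three_eq_zero
  rw [isCap_iff_neg_add_notMem]
  refine ⟨fun h u v hu hv huv hadd hcu hcv hcadd => ?_, fun h x hx y hy hxy hz => ?_⟩
  · refine h (u + a) ?_ (v + a) ?_ (by simpa) ?_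
    · simpa [mem_coneAt] using ⟨hu, hcu⟩
    · simpa [mem_coneAt] using ⟨hv, hcv⟩
    · rw [mem_coneAt, ← sub_ne_zero, third_sub, quadEval_neg]
      simpa only [add_sub_cancel_right, neg_ne_zero] using ⟨hadd, hcadd⟩
  · rw [mem_coneAt] at hx hy
    rw [mem_coneAt, ← sub_ne_zero, third_sub, neg_ne_zero, quadEval_neg] at hz
    exact h _ _ (sub_ne_zero.2 hx.1) (sub_ne_zero.2 hy.1) (by simpa) hz.1 hx.2 hy.2 hz.2

end QuadraticForms

section BitSlicing

/-- The position of a list of ternary digits in the lexicographic order. -/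
def code : List (ZMod 3) → ℕ
  | [] => 0
  | d :: ds => d.val * 3 ^ ds.length + code ds

theorem code_lt (ds : List (ZMod 3)) : code ds < 3 ^ ds.length := by
  induction ds with
  | nil => decide
  | cons d ds ih =>
    rw [code, List.length_cons, pow_succ]
    have := Nat.mul_le_mul_right (3 ^ ds.length) (Nat.le_of_lt_succ d.val_lt)
    lia

/-- The bit mask of length `3 * s` composed of three consecutive blocks of length `s`. -/
def concatBlocks (s a b c : ℕ) : ℕ := a ||| b <<< s ||| c <<< (2 * s)

theorem concatBlocks_lt {s a b c : ℕ} (ha : a < 2 ^ s) (hb : b < 2 ^ s) (hc : c < 2 ^ s) :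
    concatBlocks s a b c < 2 ^ (s * 3) := by
  have shift {x k : ℕ} (hx : x < 2 ^ s) (hk : k ≤ 2) : x <<< (k * s) < 2 ^ (s * 3) := by
    rw [Nat.shiftLeft_eq]
    calc x * 2 ^ (k * s) < 2 ^ s * 2 ^ (k * s) := by gcongr
      _ = 2 ^ (s * (k + 1)) := by ring
      _ ≤ 2 ^ (s * 3) := by gcongr <;> lia
  exact Nat.or_lt_two_pow (Nat.or_lt_two_pow (by simpa using shift ha zero_le_two)
    (by simpa using shift hb one_le_two)) (shift hc le_rfl)

theorem testBit_concatBlocks {s a b i : ℕ} (ha : a < 2 ^ s) (hb : b < 2 ^ s) (c : ℕ) (hi : i < s)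
    (d : ZMod 3) :
    (concatBlocks s a b c).testBit (d.val * s + i) = (![a, b, c] d).testBit i := by
  have high {x j : ℕ} (hx : x < 2 ^ s) (hj : s ≤ j) : x.testBit j = false :=
    Nat.testBit_lt_two_pow (hx.trans_le (Nat.pow_le_pow_right two_pos hj))
  fin_cases d
  · change (concatBlocks s a b c).testBit (0 * s + i) = a.testBit i
    have : ¬ s ≤ i ∧ ¬ 2 * s ≤ i := by lia
    simp [concatBlocks, this]
  · change (concatBlocks s a b c).testBit (1 * s + i) = b.testBit i
    have : ¬ 2 * s ≤ s + i := by lia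
    simp [concatBlocks, this, high ha]
  · change (concatBlocks s a b c).testBit (2 * s + i) = c.testBit i
    have : s ≤ 2 * s + i ∧ s ≤ 2 * s + i - s := by lia
    simp [concatBlocks, this, high ha, high hb]

/-- The bit masks of the lists `c` with `dotList c w = 0`, `1` and `2`, where bit `code c` stands
for `c`. A triple rather than a function, so that evaluation computes every mask once. -/
def levelMasks : List (ZMod 3) → ℕ × ℕ × ℕ
  | [] => (1, 0, 0)
  | w :: ws =>
    let p := levelMasks ws
    let s := 3 ^ ws.length
    match w with
    | 0 => (concatBlocks s p.1 p.1 p.1, concatBlocks s p.2.1 p.2.1 p.2.1,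
        concatBlocks s p.2.2 p.2.2 p.2.2)
    | 1 => (concatBlocks s p.1 p.2.2 p.2.1, concatBlocks s p.2.1 p.1 p.2.2,
        concatBlocks s p.2.2 p.2.1 p.1)
    | 2 => (concatBlocks s p.1 p.2.1 p.2.2, concatBlocks s p.2.1 p.2.2 p.1,
        concatBlocks s p.2.2 p.1 p.2.1)

/-- The component of `levelMasks w` that belongs to the value `t`. -/
def levelMask (w : List (ZMod 3)) : ZMod 3 → ℕ :=
  ![(levelMasks w).1, (levelMasks w).2.1, (levelMasks w).2.2]

theorem levelMask_cons (w : ZMod 3) (ws : List (ZMod 3)) (t : ZMod 3) :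
    levelMask (w :: ws) t = concatBlocks (3 ^ ws.length) (levelMask ws t) (levelMask ws (t - w))
      (levelMask ws (t - 2 * w)) := by
  fin_cases w <;> fin_cases t <;> rfl

theorem levelMask_lt (w : List (ZMod 3)) (t : ZMod 3) : levelMask w t < 2 ^ 3 ^ w.length := by
  induction w generalizing t with
  | nil => decide +revert
  | cons w ws ih =>
    rw [levelMask_cons, List.length_cons, pow_succ]
    exact concatBlocks_lt (ih _) (ih _) (ih _)

theorem testBit_levelMask {w c : List (ZMod 3)} (h : c.length = w.length) (t : ZMod 3) :
    (levelMask w t).testBit (code c) ↔ dotList c w = t := by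
  induction w generalizing c t with
  | nil =>
    rw [List.length_nil, List.length_eq_zero_iff] at h
    subst h
    decide +revert
  | cons w ws ih =>
    obtain ⟨d, ds, rfl⟩ := List.exists_cons_of_length_eq_add_one h
    have hlen : ds.length = ws.length := by simpa using h
    have dot_cons : dotList (d :: ds) (w :: ws) = d * w + dotList ds ws := rfl
    rw [levelMask_cons, code, hlen, testBit_concatBlocks (levelMask_lt _ _) (levelMask_lt _ _) _
      (hlen ▸ code_lt ds), dot_cons]
    fin_cases d
    · change (levelMask ws t).testBit (code ds) ↔ 0 * w + dotList ds ws = t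
      rw [ih hlen, zero_mul, zero_add]
    · change (levelMask ws (t - w)).testBit (code ds) ↔ 1 * w + dotList ds ws = t
      rw [ih hlen, eq_sub_iff_add_eq', one_mul]
    · change (levelMask ws (t - 2 * w)).testBit (code ds) ↔ 2 * w + dotList ds ws = t
      rw [ih hlen, eq_sub_iff_add_eq, add_comm]

/-- The lists of `n` digits whose positions are marked in the bit mask `m`, found by descending
into those of its three blocks that are not empty. -/
def decode : ℕ → ℕ → List (List (ZMod 3))
  | 0, m => if m.testBit 0 then [[]] else []
  | n + 1, m =>
    if m = 0 then []
    else [0, 1, 2].flatMap fun d : ZMod 3 =>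
      (decode n ((m >>> (d.val * 3 ^ n)) % 2 ^ 3 ^ n)).map (d :: ·)

theorem mem_decode {n m : ℕ} {c : List (ZMod 3)} :
    c ∈ decode n m ↔ c.length = n ∧ m.testBit (code c) := by
  induction n generalizing m c with
  | zero =>
    simp only [decode, List.length_eq_zero_iff]
    split_ifs with h <;> simp +contextual [code, h]
  | succ n ih =>
    rw [decode]
    split_ifs with h
    · simp [h]
    · cases c with
      | nil => simp
      | cons d ds =>
        have d_mem : d ∈ ([0, 1, 2] : List (ZMod 3)) := by decide +revert
        have testBit_slice (h : ds.length = n) :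
            ((m >>> (d.val * 3 ^ n)) % 2 ^ 3 ^ n).testBit (code ds) =
              m.testBit (code (d :: ds)) := by
          simp [code, h, h ▸ code_lt ds]
        simp only [List.mem_flatMap, List.mem_map, List.cons.injEq, List.length_cons,
          Nat.add_right_cancel_iff]
        refine ⟨?_, fun ⟨hlen, hbit⟩ => ⟨d, d_mem, ds, ?_, rfl, rfl⟩⟩
        · rintro ⟨d', -, ds', hds, rfl, rfl⟩
          obtain ⟨hlen, hbit⟩ := ih.1 hds
          exact ⟨hlen, testBit_slice hlen ▸ hbit⟩
        · exact ih.2 ⟨hlen, testBit_slice hlen ▸ hbit⟩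

end BitSlicing

section DisjointCones

/-- The points of `AG(4,3)` in lexicographic order. -/
def points : List (AG 4) := do
  let a ← [0, 1, 2]
  let b ← [0, 1, 2]
  let c ← [0, 1, 2]
  let d ← [0, 1, 2]
  pure ![a, b, c, d]

theorem mem_points (v : AG 4) : v ∈ points := by
  decide +kernel +revert

/-- One of the two points on each line through the origin, the one whose first nonzero coordinate
is `1`. -/
def lineReps : List (AG 4) := points.filter fun v => (List.ofFn v).find? (· ≠ 0) = some 1

theorem mem_lineReps_or_neg_mem {v : AG 4} (hv : v ≠ 0) : v ∈ lineReps ∨ -v ∈ lineReps := by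
  decide +kernel +revert

theorem forall_iff_forall_mem_lineReps {p : AG 4 → Prop} (h0 : p 0) (hneg : ∀ v, p (-v) → p v) :
    (∀ v, p v) ↔ ∀ v ∈ lineReps, p v := by
  refine ⟨fun h v _ => h v, fun h v => ?_⟩
  rcases eq_or_ne v 0 with rfl | hv
  · exact h0
  · exact (mem_lineReps_or_neg_mem hv).elim (h v) fun hv => hneg v (h _ hv)

theorem zero_notMem_lineReps : 0 ∉ lineReps := by
  decide +kernel

theorem neg_notMem_lineReps {v : AG 4} (hv : v ∈ lineReps) : -v ∉ lineReps := by
  decide +kernel +revert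

theorem nodup_lineReps : lineReps.Nodup := by
  decide +kernel

/-- The bit mask of the quadratic forms that do not vanish at `v`, where bit `code c` stands for
the form with coefficient list `c`. -/
def nonzeroMask (v : AG 4) : ℕ := levelMask (monomials v) 1 ||| levelMask (monomials v) 2

theorem testBit_nonzeroMask {c : List (ZMod 3)} (h : c.length = 10) (v : AG 4) :
    (nonzeroMask v).testBit (code c) ↔ quadEval c v ≠ 0 := by
  have ne_zero_iff : ∀ t : ZMod 3, t = 1 ∨ t = 2 ↔ t ≠ 0 := by decide
  rw [nonzeroMask, Nat.testBit_or, Bool.or_eq_true, testBit_levelMask h, testBit_levelMask h,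
    ← quadEval, ne_zero_iff]

/-- The bits common to all masks in a list of masks of quadratic forms. -/
def commonBits (L : List ℕ) : ℕ := L.foldr (· &&& ·) (2 ^ 3 ^ 10 - 1)

theorem testBit_commonBits {L : List ℕ} {c : List (ZMod 3)} (h : c.length = 10) :
    (commonBits L).testBit (code c) ↔ ∀ m ∈ L, m.testBit (code c) := by
  induction L with
  | nil =>
    have hlt : code c < 3 ^ 10 := h ▸ code_lt c
    simpa only [commonBits, List.foldr_nil, Nat.testBit_two_pow_sub_one, List.not_mem_nil,
      false_imp_iff, implies_true, iff_true, decide_eq_true_eq] using hlt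
  | cons m L ih =>
    rw [List.forall_mem_cons, ← ih, commonBits, List.foldr_cons, Nat.testBit_and, Bool.and_eq_true,
      commonBits]

/-- The masks of the forms that do not vanish at all of `u`, `v` and `u + v`, for all pairs of
entries `u`, `v` of a list. -/
def anisotropicMasks : List (AG 4) → List ℕ
  | [] => []
  | u :: l =>
    l.map (fun v => nonzeroMask u ||| nonzeroMask v ||| nonzeroMask (u + v)) ++ anisotropicMasks l

theorem forall_testBit_anisotropicMasks {l : List (AG 4)} {c : List (ZMod 3)}
    (h : c.length = 10) :
    (∀ m ∈ anisotropicMasks l, m.testBit (code c)) ↔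
      l.Pairwise fun u v => quadEval c u = 0 → quadEval c v = 0 → quadEval c (u + v) ≠ 0 := by
  induction l with
  | nil => simp [anisotropicMasks]
  | cons u l ih =>
    simp only [anisotropicMasks, List.mem_append, or_imp, forall_and, List.forall_mem_map,
      Nat.testBit_or, Bool.or_eq_true, testBit_nonzeroMask h, ih, List.pairwise_cons]
    grind

theorem isCap_coneAt_iff_pairwise {c : List (ZMod 3)} {a : AG 4} :
    IsCap (coneAt c a) ↔ lineReps.Pairwise fun u v =>
      quadEval c u = 0 → quadEval c v = 0 → quadEval c (u + v) ≠ 0 := by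
  rw [isCap_coneAt_iff]
  refine ⟨fun h => nodup_lineReps.imp_of_mem fun {u v} hu hv huv => h u v ?_ ?_ huv ?_,
    fun h u v hu hv huv hadd hcu hcv => ?_⟩
  · exact ne_of_mem_of_not_mem hu zero_notMem_lineReps
  · exact ne_of_mem_of_not_mem hv zero_notMem_lineReps
  · exact fun hadd => neg_notMem_lineReps hu (neg_eq_of_add_eq_zero_right hadd ▸ hv)
  have anisotropic : ∀ u ∈ lineReps, ∀ v ∈ lineReps, u ≠ v → quadEval c u = 0 → quadEval c v = 0 →
      quadEval c (u + v) ≠ 0 ∧ quadEval c (u - v) ≠ 0 := by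
    intro u hu v hv huv hcu hcv
    have : Std.Symm fun u v => quadEval c u = 0 → quadEval c v = 0 → quadEval c (u + v) ≠ 0 :=
      ⟨fun u v h hcv hcu => add_comm u v ▸ h hcu hcv⟩
    have hadd := h.forall hu hv huv hcu hcv
    have hsum := quadEval_add_add_quadEval_sub c u v
    refine ⟨hadd, fun hsub => hadd ?_⟩
    simpa [hcu, hcv, hsub] using hsum
  have neg_ne : -u ≠ v := fun h => hadd (h ▸ add_neg_cancel u)
  rcases mem_lineReps_or_neg_mem hu with hu' | hu' <;>
    rcases mem_lineReps_or_neg_mem hv with hv' | hv'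
  · exact (anisotropic u hu' v hv' huv hcu hcv).1
  · have := (anisotropic u hu' (-v) hv' (by grind) hcu (by rwa [quadEval_neg])).2
    rwa [sub_neg_eq_add] at this
  · have := (anisotropic (-u) hu' v hv' neg_ne (by rwa [quadEval_neg]) hcv).2
    rwa [← neg_add', quadEval_neg] at this
  · have := (anisotropic (-u) hu' (-v) hv' (by simpa) (by rwa [quadEval_neg])
      (by rwa [quadEval_neg])).1
    rwa [← neg_add, quadEval_neg] at this

/-- The mask of the forms whose cones with vertex `a` are caps disjoint from `cone`. -/
def candidateMask (a : AG 4) : ℕ :=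
  commonBits (anisotropicMasks lineReps) &&&
    commonBits ((lineReps.filter fun v => OnCone (a + v) ∨ OnCone (a - v)).map nonzeroMask)

theorem disjoint_cone_coneAt_iff {c : List (ZMod 3)} {a : AG 4} :
    Disjoint cone (coneAt c a) ↔
      ∀ v ∈ lineReps, OnCone (a + v) ∨ OnCone (a - v) → quadEval c v ≠ 0 := by
  simp only [disjoint_left, cone, mem_filter_univ, mem_coneAt, not_and]
  refine ⟨fun h v hv hon => ?_, fun h x hx hxa => ?_⟩
  · have hv_ne : v ≠ 0 := ne_of_mem_of_not_mem hv zero_notMem_lineReps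
    rcases hon with hadd | hsub
    · simpa using h hadd (by simpa)
    · simpa [quadEval_neg] using h hsub (by simpa)
  · rcases mem_lineReps_or_neg_mem (sub_ne_zero.2 hxa) with hv | hv
    · exact h _ hv (.inl (by simpa))
    · simpa only [quadEval_neg] using h _ hv (.inr (by simpa))

theorem testBit_candidateMask {c : List (ZMod 3)} (h : c.length = 10) {a : AG 4} :
    (candidateMask a).testBit (code c) ↔ IsCap (coneAt c a) ∧ Disjoint cone (coneAt c a) := by
  rw [candidateMask, Nat.testBit_and, Bool.and_eq_true, testBit_commonBits h, testBit_commonBits h,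
    forall_testBit_anisotropicMasks h, isCap_coneAt_iff_pairwise, disjoint_cone_coneAt_iff]
  simp only [List.forall_mem_map, List.mem_filter, decide_eq_true_eq, and_imp,
    testBit_nonzeroMask h]

end DisjointCones

section DisjointCaps

/-- Centrally symmetric sets omitting the origin, such as quadric cones without their vertex. -/
def Antipodal {n : ℕ} (C : Finset (AG n)) : Prop := 0 ∉ C ∧ ∀ v ∈ C, -v ∈ C

theorem Antipodal.neg_mem_iff {n : ℕ} {C : Finset (AG n)} (hC : Antipodal C) {v : AG n} :
    -v ∈ C ↔ v ∈ C :=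
  ⟨fun h => neg_neg v ▸ hC.2 _ h, hC.2 v⟩

theorem antipodal_coneAt_zero (c : List (ZMod 3)) : Antipodal (coneAt c 0) := by
  simp only [Antipodal, mem_coneAt, sub_zero, quadEval_neg, neg_ne_zero]
  exact ⟨fun h => h.1 rfl, fun _ => id⟩

theorem Antipodal.card_eq {C : Finset (AG 4)} (hC : Antipodal C) :
    #C = 2 * #{v ∈ C | v ∈ lineReps} := by
  have image_neg : ({v ∈ C | v ∉ lineReps}) = ({v ∈ C | v ∈ lineReps}).image Neg.neg := by
    ext v
    rw [mem_filter, mem_image]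
    refine ⟨fun ⟨hv, hv_rep⟩ => ⟨-v, mem_filter.2 ⟨hC.2 v hv, ?_⟩, neg_neg v⟩, ?_⟩
    · exact (mem_lineReps_or_neg_mem (ne_of_mem_of_not_mem hv hC.1)).resolve_left hv_rep
    · rintro ⟨u, hu, rfl⟩
      rw [mem_filter] at hu
      exact ⟨hC.2 u hu.1, neg_notMem_lineReps hu.2⟩
  rw [← card_filter_add_card_filter_not (s := C) (· ∈ lineReps), image_neg,
    card_image_of_injective _ neg_injective, two_mul]

theorem Antipodal.eq_iff {C D : Finset (AG 4)} (hC : Antipodal C) (hD : Antipodal D) :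
    C = D ↔ ∀ v ∈ lineReps, v ∈ C ↔ v ∈ D := by
  rw [Finset.ext_iff, forall_iff_forall_mem_lineReps (by simp only [hC.1, hD.1])]
  exact fun v => by rw [hC.neg_mem_iff, hD.neg_mem_iff]; exact id

theorem Antipodal.disjoint_iff {C D : Finset (AG 4)} (hC : Antipodal C) (hD : Antipodal D) :
    Disjoint C D ↔ ∀ v ∈ lineReps, v ∈ C → v ∉ D := by
  rw [disjoint_left, forall_iff_forall_mem_lineReps fun h => absurd h hC.1]
  exact fun v => by rw [hC.neg_mem_iff, hD.neg_mem_iff]; exact id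

/-- The number whose binary digits record which entries of a list satisfy `p`. -/
def bitMask {α : Type*} (p : α → Bool) (l : List α) : ℕ := l.foldr (fun x m => Nat.bit (p x) m) 0

theorem bitMask_eq_iff {α : Type*} {p q : α → Bool} {l : List α} :
    bitMask p l = bitMask q l ↔ ∀ x ∈ l, p x = q x := by
  induction l with
  | nil => simp [bitMask]
  | cons x l ih =>
    rw [List.forall_mem_cons, ← ih]
    change Nat.bit (p x) (bitMask p l) = Nat.bit (q x) (bitMask q l) ↔ _
    rw [Nat.bit_val, Nat.bit_val]
    cases p x <;> cases q x <;> simp only [Bool.toNat_true, Bool.toNat_false] <;> grind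

theorem bitMask_land_eq_zero_iff {α : Type*} {p q : α → Bool} {l : List α} :
    bitMask p l &&& bitMask q l = 0 ↔ ∀ x ∈ l, p x → ¬ q x := by
  induction l with
  | nil => simp [bitMask]
  | cons x l ih =>
    rw [List.forall_mem_cons, ← ih]
    change Nat.bit (p x) (bitMask p l) &&& Nat.bit (q x) (bitMask q l) = 0 ↔ _
    rw [Nat.land_bit, Nat.bit_eq_zero_iff, Bool.and_eq_false_imp, and_comm]
    simp

/-- The bit mask of the lines through the origin that meet `C`; it determines `C` if `C` is
antipodal. -/
def lineMask (C : Finset (AG 4)) : ℕ := bitMask (· ∈ C) lineReps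

theorem Antipodal.lineMask_eq_iff {C D : Finset (AG 4)} (hC : Antipodal C) (hD : Antipodal D) :
    lineMask C = lineMask D ↔ C = D := by
  simp only [lineMask, bitMask_eq_iff, hC.eq_iff hD, decide_eq_decide]

theorem Antipodal.lineMask_land_eq_zero_iff {C D : Finset (AG 4)} (hC : Antipodal C)
    (hD : Antipodal D) : lineMask C &&& lineMask D = 0 ↔ Disjoint C D := by
  simp only [lineMask, bitMask_land_eq_zero_iff, hC.disjoint_iff hD, decide_eq_true_eq]

/-- The quadratic forms with first coefficient `1` whose cones with vertex `0` are caps disjoint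
from `cone`, given by their coefficient lists. -/
def disjointForms : List (List (ZMod 3)) :=
  (decode 10 (candidateMask 0)).filter fun c => c.head? = some 1

theorem mem_disjointForms {c : List (ZMod 3)} :
    c ∈ disjointForms ↔
      c.length = 10 ∧ c.head? = some 1 ∧ IsCap (coneAt c 0) ∧ Disjoint cone (coneAt c 0) := by
  rw [disjointForms, List.mem_filter, mem_decode, decide_eq_true_eq, and_assoc,
    and_comm (b := _ = _)]
  exact and_congr_right fun h => by rw [testBit_candidateMask h]

/-- The points of `lineReps` on the quadric with coefficient list `c`, read off the bit masks. -/
def zeroReps (c : List (ZMod 3)) : List (AG 4) :=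
  lineReps.filter fun v => !(nonzeroMask v).testBit (code c)

theorem mem_zeroReps {c : List (ZMod 3)} (h : c.length = 10) {v : AG 4} :
    v ∈ zeroReps c ↔ v ∈ coneAt c 0 ∧ v ∈ lineReps := by
  rw [zeroReps, List.mem_filter, mem_coneAt, sub_zero, Bool.not_eq_true', ← Bool.not_eq_true,
    testBit_nonzeroMask h, not_not, and_comm]
  exact and_congr_left fun hv =>
    (and_iff_right (ne_of_mem_of_not_mem hv zero_notMem_lineReps)).symm

theorem length_zeroReps {c : List (ZMod 3)} (h : c ∈ disjointForms) : (zeroReps c).length = 10 := by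
  decide +kernel +revert

theorem candidateMask_eq_zero {a : AG 4} (ha : a ≠ 0) : candidateMask a = 0 := by
  have : ∀ a ∈ points, a ≠ 0 → candidateMask a = 0 := by
    decide +kernel
  exact this a (mem_points a) ha

theorem card_coneAt {c : List (ZMod 3)} (h : c ∈ disjointForms) : #(coneAt c 0) = 20 := by
  rw [(antipodal_coneAt_zero c).card_eq, show 20 = 2 * 10 from rfl, ← length_zeroReps h,
    ← List.toFinset_card_of_nodup (l := zeroReps c) (nodup_lineReps.filter _)]
  congr 2
  ext v
  rw [List.mem_toFinset, mem_zeroReps (mem_disjointForms.1 h).1, mem_filter, mem_coneAt]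

theorem exists_mem_disjointForms {C : Finset (AG 4)} (hC : MaximalCap C) (hdisj : Disjoint cone C) :
    ∃ c ∈ disjointForms, coneAt c 0 = C := by
  obtain ⟨hcap, hcard⟩ := maximalCap_iff.1 hC
  obtain ⟨c, a, hlen, rfl⟩ := exists_eq_coneAt (hcap.affinelyEquivalent_cone hcard)
  have mask_bit := (testBit_candidateMask hlen).2 ⟨hcap, hdisj⟩
  obtain rfl : a = 0 := by
    by_contra ha
    simp [candidateMask_eq_zero ha] at mask_bit
  obtain ⟨d, ds, rfl⟩ := List.exists_cons_of_length_eq_add_one hlen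
  obtain hd | hd | hd : d = 0 ∨ d = 1 ∨ d = 2 := by
    clear * -
    decide +revert
  · refine absurd hdisj (not_disjoint_iff.2 ⟨![1, 0, 0, 0], by decide +kernel, ?_⟩)
    rw [mem_coneAt, quadEval, hd, monomials, dotList_cons]
    simp [dotList_cons, dotList_nil]
  · exact ⟨_, mem_disjointForms.2 ⟨hlen, by rw [hd, List.head?_cons], hcap, hdisj⟩, rfl⟩
  · have normalized := coneAt_map_neg (d :: ds) 0
    refine ⟨_, mem_disjointForms.2 ⟨(List.length_map _).trans hlen, ?_, ?_⟩, normalized⟩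
    · rw [hd]
      rfl
    · rw [normalized]
      exact ⟨hcap, hdisj⟩

/-- The maximal caps disjoint from `cone`. -/
def disjointCaps : Finset (Finset (AG 4)) := (disjointForms.map (coneAt · 0)).toFinset

theorem mem_disjointCaps {C : Finset (AG 4)} :
    C ∈ disjointCaps ↔ MaximalCap C ∧ Disjoint cone C := by
  simp only [disjointCaps, List.mem_toFinset, List.mem_map]
  refine ⟨?_, fun h => exists_mem_disjointForms h.1 h.2⟩
  rintro ⟨c, hc, rfl⟩
  obtain ⟨-, -, hcap, hdisj⟩ := mem_disjointForms.1 hc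
  exact ⟨maximalCap_iff.2 ⟨hcap, card_coneAt hc⟩, hdisj⟩

theorem antipodal_of_mem_disjointCaps {C : Finset (AG 4)} (hC : C ∈ disjointCaps) :
    Antipodal C := by
  obtain ⟨c, -, rfl⟩ := List.mem_map.1 (List.mem_toFinset.1 hC)
  exact antipodal_coneAt_zero c

end DisjointCaps

section Counting

/-- The edges that span a triangle with the vertex `a` in the graph of the relation `r` on `s`. -/
def oppositeEdges {α : Type*} [DecidableEq α] (r : α → α → Prop) [DecidableRel r] (s : Finset α)
    (a : α) : Finset (Finset α) :=
  {e ∈ {x ∈ s | r a x}.powersetCard 2 | ∀ x ∈ e, ∀ y ∈ e, x ≠ y → r x y}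

section OppositeEdges

variable {α β : Type*} [DecidableEq α] [DecidableEq β] {r : α → α → Prop} [DecidableRel r]
  {r' : β → β → Prop} [DecidableRel r'] {s : Finset α} {a : α} {e : Finset α}

theorem mem_oppositeEdges :
    e ∈ oppositeEdges r s a ↔
      e ⊆ s ∧ (∀ x ∈ e, r a x) ∧ #e = 2 ∧ ∀ x ∈ e, ∀ y ∈ e, x ≠ y → r x y := by
  simp only [oppositeEdges, mem_filter, mem_powersetCard, subset_iff, forall_and,
    and_assoc]

theorem oppositeEdges_image {f : α → β} (hf : Set.InjOn f s)
    (hr : ∀ x ∈ s, ∀ y ∈ s, r' (f x) (f y) ↔ r x y) (ha : a ∈ s) :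
    oppositeEdges r' (s.image f) (f a) = (oppositeEdges r s a).image (Finset.image f) := by
  have image_mem {e : Finset α} (he : e ⊆ s) :
      e.image f ∈ oppositeEdges r' (s.image f) (f a) ↔ e ∈ oppositeEdges r s a := by
    simp only [mem_oppositeEdges, image_subset_image he, he, forall_mem_image,
      card_image_of_injOn (hf.mono he), true_and]
    refine and_congr (forall₂_congr fun x hx => hr a ha x (he hx)) (and_congr_right fun _ => ?_)
    exact forall₂_congr fun x hx => forall₂_congr fun y hy =>
      imp_congr (hf.ne_iff (he hx) (he hy)) (hr x (he hx) y (he hy))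
  ext e'
  rw [mem_image]
  refine ⟨fun he' => ?_, ?_⟩
  · obtain ⟨e, he, rfl⟩ := subset_image_iff.1 (mem_oppositeEdges.1 he').1
    exact ⟨e, (image_mem (mod_cast he)).1 he', rfl⟩
  · rintro ⟨e, he, rfl⟩
    exact (image_mem (mem_oppositeEdges.1 he).1).2 he

theorem card_filter_card_oppositeEdges_image {f : α → β} (hf : Set.InjOn f s)
    (hr : ∀ x ∈ s, ∀ y ∈ s, r' (f x) (f y) ↔ r x y) (k : ℕ) :
    #{b ∈ s.image f | #(oppositeEdges r' (s.image f) b) = k} =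
      #{a ∈ s | #(oppositeEdges r s a) = k} := by
  rw [filter_image, card_image_of_injOn (hf.mono (filter_subset _ s))]
  congr 1
  refine filter_congr fun a ha => ?_
  rw [oppositeEdges_image hf hr ha, card_image_of_injOn]
  exact (image_injOn_powerset_of_injOn hf).mono fun e he =>
    mem_powerset.2 (mem_oppositeEdges.1 he).1

end OppositeEdges

/-- The values of `lineMask` on `disjointCaps`, read off the bit masks of quadratic forms. -/
def capMasks : List ℕ :=
  disjointForms.map fun c => bitMask (fun v => !(nonzeroMask v).testBit (code c)) lineReps

theorem image_lineMask_disjointCaps : disjointCaps.image lineMask = capMasks.toFinset := by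
  have lineMask_coneAt {c : List (ZMod 3)} (hc : c ∈ disjointForms) : lineMask (coneAt c 0) =
      bitMask (fun v => !(nonzeroMask v).testBit (code c)) lineReps := by
    refine bitMask_eq_iff.2 fun v hv => ?_
    have mem_iff := mem_zeroReps (mem_disjointForms.1 hc).1 (v := v)
    rw [zeroReps, List.mem_filter, and_comm, and_congr_left_iff] at mem_iff
    rw [Bool.eq_iff_iff, decide_eq_true_eq, mem_iff hv]
  ext m
  simp only [disjointCaps, capMasks, mem_image, List.mem_toFinset, List.mem_map,
    exists_exists_and_eq_and]
  exact exists_congr fun c => and_congr_right fun hc => by rw [lineMask_coneAt hc]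

theorem card_filter_capMasks :
    ∀ p ∈ [(1, 36), (2, 90), (6, 72)],
      #{m ∈ capMasks.toFinset |
        #(oppositeEdges (fun x y => x &&& y = 0) capMasks.toFinset m) = p.1} = p.2 := by
  decide +kernel

theorem card_filter_disjointCaps {k n : ℕ} (h : (k, n) ∈ [(1, 36), (2, 90), (6, 72)]) :
    #{C ∈ disjointCaps | #(oppositeEdges Disjoint disjointCaps C) = k} = n := by
  have lineMask_injOn : Set.InjOn lineMask disjointCaps := fun C hC D hD =>
    ((antipodal_of_mem_disjointCaps hC).lineMask_eq_iff (antipodal_of_mem_disjointCaps hD)).1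
  have land_eq_zero_iff : ∀ C ∈ disjointCaps, ∀ D ∈ disjointCaps,
      lineMask C &&& lineMask D = 0 ↔ Disjoint C D := fun C hC D hD =>
    (antipodal_of_mem_disjointCaps hC).lineMask_land_eq_zero_iff (antipodal_of_mem_disjointCaps hD)
  rw [← card_filter_card_oppositeEdges_image (r' := fun x y => x &&& y = 0) lineMask_injOn
    land_eq_zero_iff, image_lineMask_disjointCaps]
  simpa only using card_filter_capMasks (k, n) h

theorem isCapPartition_iff {P : Finset (Finset (AG 4))} :
    IsCapPartition P ↔
      #P = 4 ∧ (∀ C ∈ P, MaximalCap C) ∧ ∀ C ∈ P, ∀ D ∈ P, C ≠ D → Disjoint C D := by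
  refine ⟨fun ⟨hcard, hmax, hdisj, _⟩ => ⟨hcard, hmax, hdisj⟩,
    fun ⟨hcard, hmax, hdisj⟩ => ⟨hcard, hmax, hdisj, ?_⟩⟩
  have card_sup : #(P.sup id) = 80 := by
    rw [sup_eq_biUnion, card_biUnion (t := id) hdisj, sum_const_nat (m := 20), hcard]
    exact fun C hC => (maximalCap_iff.1 (hmax C hC)).2
  have card_compl : #(P.sup id)ᶜ = 1 := by
    rw [card_compl, card_sup]
    rfl
  obtain ⟨a, ha⟩ := card_eq_one.1 card_compl
  exact ⟨a, by rw [← ha, ← compl_eq_univ_sdiff, compl_compl]⟩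

theorem isCapPartition_insert_insert_iff {C : Finset (AG 4)} {e : Finset (Finset (AG 4))}
    (hC : C ∈ disjointCaps) (hcone_e : cone ∉ e) (hCe : C ∉ e) :
    IsCapPartition (insert cone (insert C e)) ↔ e ∈ oppositeEdges Disjoint disjointCaps C := by
  obtain ⟨C_max, cone_disj⟩ := mem_disjointCaps.1 hC
  have hcone : cone ∉ insert C e := by
    rw [mem_insert, not_or]
    exact ⟨maximalCap_cone.ne_of_disjoint cone_disj, hcone_e⟩
  rw [isCapPartition_iff, card_insert_of_notMem hcone, card_insert_of_notMem hCe,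
    mem_oppositeEdges]
  simp only [forall_mem_insert, subset_iff, mem_disjointCaps, disjoint_comm]
  grind [maximalCap_cone]

theorem card_isCapPartition_eq_card_oppositeEdges {C : Finset (AG 4)} (hC : C ∈ disjointCaps) :
    Nat.card {P // IsCapPartition P ∧ cone ∈ P ∧ C ∈ P} =
      #(oppositeEdges Disjoint disjointCaps C) := by
  have notMem {e : Finset (Finset (AG 4))} (he : e ∈ oppositeEdges Disjoint disjointCaps C) :
      cone ∉ e ∧ C ∉ e := by
    obtain ⟨he_sub, he_disj, -, -⟩ := mem_oppositeEdges.1 he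
    refine ⟨fun h => ?_, fun h => (mem_disjointCaps.1 hC).1.ne_of_disjoint (he_disj C h) rfl⟩
    exact maximalCap_cone.ne_of_disjoint (mem_disjointCaps.1 (he_sub h)).2 rfl
  have sdiff_pair {e : Finset (Finset (AG 4))} (he : e ∈ oppositeEdges Disjoint disjointCaps C) :
      insert cone (insert C e) \ {cone, C} = e := by
    have := notMem he
    grind
  have inj : Set.InjOn (fun e => insert cone (insert C e))
      (oppositeEdges Disjoint disjointCaps C : Set (Finset (Finset (AG 4)))) :=
    fun d hd e he h => by rw [← sdiff_pair hd, ← sdiff_pair he]; exact congrArg (· \ {cone, C}) h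
  rw [← card_image_of_injOn inj]
  refine Nat.subtype_card _ fun P => ?_
  rw [mem_image]
  refine ⟨?_, fun ⟨hP, hcone, hCP⟩ => ?_⟩
  · rintro ⟨e, he, rfl⟩
    obtain ⟨hcone, hCe⟩ := notMem he
    exact ⟨(isCapPartition_insert_insert_iff hC hcone hCe).2 he, by simp, by simp⟩
  · have insert_sdiff : insert cone (insert C (P \ {cone, C})) = P := by
      have := union_sdiff_of_subset (insert_subset hcone (singleton_subset_iff.2 hCP))
      rwa [insert_union, singleton_union] at this
    refine ⟨P \ {cone, C}, ?_, insert_sdiff⟩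
    rwa [← isCapPartition_insert_insert_iff hC (by simp) (by simp), insert_sdiff]

end Counting

section Completable

variable {n : ℕ}

theorem MaximalCap.map {C : Finset (AG n)} (hC : MaximalCap C) (f : AG n ≃ᵃ[ZMod 3] AG n) :
    MaximalCap (C.map f.toEquiv.toEmbedding) :=
  ⟨hC.1.map f, fun D hD => by simpa only [card_map] using hC.2 _ (hD.map f.symm)⟩

theorem maximalCap_map_iff {C : Finset (AG n)} (f : AG n ≃ᵃ[ZMod 3] AG n) :
    MaximalCap (C.map f.toEquiv.toEmbedding) ↔ MaximalCap C := by
  refine ⟨fun h => ?_, fun h => h.map f⟩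
  have map_symm_map : (C.map f.toEquiv.toEmbedding).map f.symm.toEquiv.toEmbedding = C :=
    f.toEquiv.finsetCongr.symm_apply_apply C
  exact map_symm_map ▸ h.map f.symm

theorem isCapPartition_finsetCongr_iff {P : Finset (Finset (AG 4))} (f : AG 4 ≃ᵃ[ZMod 3] AG 4) :
    IsCapPartition (f.toEquiv.finsetCongr.finsetCongr P) ↔ IsCapPartition P := by
  simp only [isCapPartition_iff, Equiv.finsetCongr_apply, card_map, forall_mem_map,
    Equiv.coe_toEmbedding, maximalCap_map_iff, map_inj, disjoint_map, ne_eq]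

/-- The property of being an `S`-`k`-completable cap: a maximal cap disjoint from `S` that lies in
exactly `k` cap-partitions containing `S`. -/
def IsCompletable (S : Finset (AG 4)) (k : ℕ) (C : Finset (AG 4)) : Prop :=
  MaximalCap C ∧ Disjoint S C ∧ Nat.card {P // IsCapPartition P ∧ S ∈ P ∧ C ∈ P} = k

theorem isCompletable_map_iff {S C : Finset (AG 4)} {k : ℕ} (f : AG 4 ≃ᵃ[ZMod 3] AG 4) :
    IsCompletable (S.map f.toEquiv.toEmbedding) k (C.map f.toEquiv.toEmbedding) ↔
      IsCompletable S k C := by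
  have card_eq : Nat.card {P // IsCapPartition P ∧ S ∈ P ∧ C ∈ P} =
      Nat.card {P // IsCapPartition P ∧ S.map f.toEquiv.toEmbedding ∈ P ∧
        C.map f.toEquiv.toEmbedding ∈ P} := by
    refine Nat.card_congr (f.toEquiv.finsetCongr.finsetCongr.subtypeEquiv fun P => ?_)
    rw [isCapPartition_finsetCongr_iff]
    exact and_congr_right fun _ => and_congr (mem_map' _).symm (mem_map' _).symm
  rw [IsCompletable, IsCompletable, maximalCap_map_iff, disjoint_map, card_eq]

theorem AffinelyEquivalent.card_isCompletable {S T : Finset (AG 4)} (h : AffinelyEquivalent S T)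
    (k : ℕ) : Nat.card {C // IsCompletable S k C} = Nat.card {C // IsCompletable T k C} := by
  obtain ⟨f, rfl⟩ := h
  exact Nat.card_congr (f.toEquiv.finsetCongr.subtypeEquiv fun C => (isCompletable_map_iff f).symm)

theorem card_isCompletable_cone (k : ℕ) :
    Nat.card {C // IsCompletable cone k C} =
      #{C ∈ disjointCaps | #(oppositeEdges Disjoint disjointCaps C) = k} := by
  refine Nat.subtype_card _ fun C => ?_
  rw [mem_filter, IsCompletable, ← and_assoc, ← mem_disjointCaps]
  exact and_congr_right fun hC => by rw [card_isCapPartition_eq_card_oppositeEdges hC]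

theorem MaximalCap.card_isCompletable {S : Finset (AG 4)} (hS : MaximalCap S) {k m : ℕ}
    (h : (k, m) ∈ [(1, 36), (2, 90), (6, 72)]) : Nat.card {C // IsCompletable S k C} = m := by
  obtain ⟨S_cap, S_card⟩ := maximalCap_iff.1 hS
  rw [(S_cap.affinelyEquivalent_cone S_card).card_isCompletable, card_isCompletable_cone,
    card_filter_disjointCaps h]

end Completable

/-- Among the 198 maximal caps disjoint from a maximal cap `S` in `AG(4,3)`: exactly 36
lie in exactly one cap-partition with `S` (S-1-completable), exactly 90 lie in exactly two
(S-2-completable), and exactly 72 lie in exactly six (S-6-completable). -/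
theorem card_completable_caps_AG43
    (S : Finset (Fin 4 → ZMod 3)) (hS : MaximalCap S) :
    Nat.card {C : Finset (Fin 4 → ZMod 3) // MaximalCap C ∧ Disjoint S C ∧
      Nat.card {P : Finset (Finset (Fin 4 → ZMod 3)) //
        IsCapPartition P ∧ S ∈ P ∧ C ∈ P} = 1} = 36 ∧
    Nat.card {C : Finset (Fin 4 → ZMod 3) // MaximalCap C ∧ Disjoint S C ∧
      Nat.card {P : Finset (Finset (Fin 4 → ZMod 3)) //
        IsCapPartition P ∧ S ∈ P ∧ C ∈ P} = 2} = 90 ∧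
    Nat.card {C : Finset (Fin 4 → ZMod 3) // MaximalCap C ∧ Disjoint S C ∧
      Nat.card {P : Finset (Finset (Fin 4 → ZMod 3)) //
        IsCapPartition P ∧ S ∈ P ∧ C ∈ P} = 6} = 72 := by
  exact ⟨hS.card_isCompletable (by simp), hS.card_isCompletable (by simp),
    hS.card_isCompletable (by simp)⟩
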